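/- arXiv:2301.11532 — 6 statements merged into one kernel-verified Lean document; each statement's English description precedes it below -/
import Mathlib

section
/- For every natural number N and every N×N complex matrix Z, the squared modulus of the permanent decomposes as |Per(Z)|² = ∑_{k=0}^{N} f^{=2(N−k)}(Z). -/
/-- The permanent of an `N × N` complex matrix (given as `Fin N → Fin N → ℂ`):
`Per(Z) = ∑_{σ ∈ S_N} ∏_i Z (σ i) i`. -/
noncomputable def perm (N : ℕ) (Z : Fin N → Fin N → ℂ) : ℂ :=
  ∑ σ : Equiv.Perm (Fin N), ∏ i, Z (σ i) i

/-- `h₂(z) = z * conj z - 1`. -/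
noncomputable def h2 (z : ℂ) : ℂ := z * (starRingEnd ℂ) z - 1

/-- The degree-`2(N-k)` part `f^{=2(N-k)}(Z)` of `|Per Z|²`:
sum over `R, R' ⊆ [N]` with `|R| = |R'| = k` of `k!` times the sum over pairs of
bijections `σ', ρ' : Rᶜ → R'ᶜ` of
`∏_{i ∈ S(σ',ρ')} h₂(Z_{σ'(i),i}) · ∏_{i ∈ Rᶜ ∖ S(σ',ρ')} Z_{σ'(i),i} conj(Z_{ρ'(i),i})`,
where `S(σ',ρ') = {i ∈ Rᶜ : σ'(i) = ρ'(i)}`. -/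
noncomputable def fdeg (N k : ℕ) (Z : Fin N → Fin N → ℂ) : ℂ :=
  ∑ R ∈ Finset.powersetCard k (Finset.univ : Finset (Fin N)),
  ∑ R' ∈ Finset.powersetCard k (Finset.univ : Finset (Fin N)),
    (Nat.factorial k : ℂ) *
      ∑ σ' : {i : Fin N // i ∈ Rᶜ} ≃ {i : Fin N // i ∈ R'ᶜ},
      ∑ ρ' : {i : Fin N // i ∈ Rᶜ} ≃ {i : Fin N // i ∈ R'ᶜ},
        ∏ i : {i : Fin N // i ∈ Rᶜ},
          if σ' i = ρ' i then h2 (Z (σ' i) i)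
          else Z (σ' i) i * (starRingEnd ℂ) (Z (ρ' i) i)

/-- Glue a bijection `R ≃ R'` and a bijection `Rᶜ ≃ R'ᶜ` into a permutation. -/
def gluePerm {α : Type*} [Fintype α] [DecidableEq α] {R R' : Finset α}
    (e : {i // i ∈ R} ≃ {i // i ∈ R'}) (f : {i // i ∈ Rᶜ} ≃ {i // i ∈ R'ᶜ}) : Equiv.Perm α :=
  Equiv.subtypeCongr e
    (((Equiv.subtypeEquivRight fun _ => Finset.mem_compl).symm.trans f).trans
      (Equiv.subtypeEquivRight fun _ => Finset.mem_compl))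

section gluePerm

variable {α : Type*} [Fintype α] [DecidableEq α] {R R' : Finset α}

theorem gluePerm_apply_of_mem (e : {i // i ∈ R} ≃ {i // i ∈ R'})
    (f : {i // i ∈ Rᶜ} ≃ {i // i ∈ R'ᶜ}) {i : α} (hi : i ∈ R) :
    gluePerm e f i = e ⟨i, hi⟩ := by
  simp [gluePerm, Equiv.subtypeCongr, Equiv.sumCompl_symm_apply_of_pos, hi]

theorem gluePerm_apply_of_mem_compl (e : {i // i ∈ R} ≃ {i // i ∈ R'})
    (f : {i // i ∈ Rᶜ} ≃ {i // i ∈ R'ᶜ}) {i : α} (hi : i ∈ Rᶜ) :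
    gluePerm e f i = f ⟨i, hi⟩ := by
  have hi' : i ∉ R := Finset.mem_compl.mp hi
  simp [gluePerm, Equiv.subtypeCongr, Equiv.sumCompl_symm_apply_of_neg, hi']
  rfl

theorem image_gluePerm (e : {i // i ∈ R} ≃ {i // i ∈ R'})
    (f : {i // i ∈ Rᶜ} ≃ {i // i ∈ R'ᶜ}) : R.image (gluePerm e f) = R' := by
  ext j
  simp only [Finset.mem_image]
  constructor
  · rintro ⟨i, hi, rfl⟩
    rw [gluePerm_apply_of_mem e f hi]
    exact (e ⟨i, hi⟩).2
  · intro hj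
    refine ⟨e.symm ⟨j, hj⟩, (e.symm ⟨j, hj⟩).2, ?_⟩
    rw [gluePerm_apply_of_mem e f (e.symm ⟨j, hj⟩).2]
    simp

/-- A sum over pairs of permutations that agree on `R` and map `R` to `R'` splits into a sum over
the common restriction `R ≃ R'` and over the two restrictions `Rᶜ ≃ R'ᶜ`. -/
theorem sum_perm_pairs_agreeing {K : Type*} [CommSemiring K] (hcard : R.card = R'.card)
    (g : α → α → α → K) :
    ∑ p : Equiv.Perm α × Equiv.Perm α with (∀ i ∈ R, p.1 i = p.2 i) ∧ R.image p.1 = R',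
        ∏ i ∈ Rᶜ, g (p.1 i) (p.2 i) i =
      (R.card.factorial : K) * ∑ s : {i // i ∈ Rᶜ} ≃ {i // i ∈ R'ᶜ},
        ∑ r : {i // i ∈ Rᶜ} ≃ {i // i ∈ R'ᶜ}, ∏ i : {i // i ∈ Rᶜ}, g (s i) (r i) i := by
  have hcount : Fintype.card ({i // i ∈ R} ≃ {i // i ∈ R'}) = R.card.factorial := by
    rw [Fintype.card_equiv (Fintype.equivOfCardEq (by simpa using hcard)), Fintype.card_coe]
  rw [← hcount, ← nsmul_eq_mul, ← Finset.card_univ, ← Finset.sum_const]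
  simp only [← Fintype.sum_prod_type']
  symm
  refine Finset.sum_bij (fun x _ => (gluePerm x.1 x.2.1, gluePerm x.1 x.2.2)) ?_ ?_ ?_ ?_
  · rintro ⟨e, s, r⟩ -
    simp only [Finset.mem_filter, Finset.mem_univ, true_and]
    refine ⟨fun i hi => ?_, image_gluePerm e s⟩
    rw [gluePerm_apply_of_mem e s hi, gluePerm_apply_of_mem e r hi]
  · rintro ⟨e, s, r⟩ - ⟨e', s', r'⟩ - h
    obtain ⟨hs, hr⟩ := Prod.mk.inj h
    have he : e = e' := by
      ext ⟨i, hi⟩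
      simpa only [gluePerm_apply_of_mem _ _ hi] using Equiv.congr_fun hs i
    have hs' : s = s' := by
      ext ⟨i, hi⟩
      simpa only [gluePerm_apply_of_mem_compl _ _ hi] using Equiv.congr_fun hs i
    have hr' : r = r' := by
      ext ⟨i, hi⟩
      simpa only [gluePerm_apply_of_mem_compl _ _ hi] using Equiv.congr_fun hr i
    rw [he, hs', hr']
  · rintro ⟨σ, ρ⟩ h
    obtain ⟨hagree, himage⟩ := (Finset.mem_filter.mp h).2
    have hσ : ∀ i, i ∈ R ↔ σ i ∈ R' := fun i => by simp [← himage]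
    have hρ : ∀ i, i ∈ R ↔ ρ i ∈ R' := fun i => by
      rw [← himage, Finset.image_congr (g := ρ) hagree]
      simp
    have hσc : ∀ i, i ∈ Rᶜ ↔ σ i ∈ R'ᶜ := fun i => by simp [hσ i]
    have hρc : ∀ i, i ∈ Rᶜ ↔ ρ i ∈ R'ᶜ := fun i => by simp [hρ i]
    refine ⟨(σ.subtypeEquiv hσ, σ.subtypeEquiv hσc, ρ.subtypeEquiv hρc), Finset.mem_univ _, ?_⟩
    refine Prod.ext (Equiv.ext fun i => ?_) (Equiv.ext fun i => ?_)
    · by_cases hi : i ∈ R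
      · exact gluePerm_apply_of_mem _ _ hi
      · exact gluePerm_apply_of_mem_compl _ _ (Finset.mem_compl.mpr hi)
    · by_cases hi : i ∈ R
      · exact (gluePerm_apply_of_mem _ _ hi).trans (hagree i hi)
      · exact gluePerm_apply_of_mem_compl _ _ (Finset.mem_compl.mpr hi)
  · rintro ⟨e, s, r⟩ -
    rw [← Finset.prod_coe_sort Rᶜ]
    refine Finset.prod_congr rfl fun i _ => ?_
    rw [gluePerm_apply_of_mem_compl e s i.2, gluePerm_apply_of_mem_compl e r i.2]

end gluePerm

/-- For every `N` and every `N×N` complex matrix `Z`,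
`|Per(Z)|² = ∑_{k=0}^{N} f^{=2(N−k)}(Z)`. -/
theorem squared_modulus_permanent_decomposition (N : ℕ) (Z : Fin N → Fin N → ℂ) :
    perm N Z * (starRingEnd ℂ) (perm N Z) = ∑ k ∈ Finset.range (N + 1), fdeg N k Z := by
  set g : Fin N → Fin N → Fin N → ℂ := fun a b i =>
    if a = b then h2 (Z a i) else Z a i * (starRingEnd ℂ) (Z b i) with hg
  have hsplit : ∀ a b i, Z a i * (starRingEnd ℂ) (Z b i) = (if a = b then 1 else 0) + g a b i := by
    intro a b i
    by_cases hab : a = b <;> simp [hg, hab, h2]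
  have hexpand : perm N Z * (starRingEnd ℂ) (perm N Z) =
      ∑ R ∈ (Finset.univ : Finset (Fin N)).powerset,
        ∑ p : Equiv.Perm (Fin N) × Equiv.Perm (Fin N) with ∀ i ∈ R, p.1 i = p.2 i,
          ∏ i ∈ Rᶜ, g (p.1 i) (p.2 i) i := by
    simp only [perm, map_sum, map_prod, Finset.sum_mul_sum, ← Finset.prod_mul_distrib, hsplit,
      ← Fintype.sum_prod_type', Finset.prod_add]
    rw [Finset.sum_comm]
    refine Finset.sum_congr rfl fun R _ => ?_
    rw [Finset.sum_filter]
    refine Finset.sum_congr rfl fun p _ => ?_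
    rw [Finset.prod_ite_zero, ← Finset.compl_eq_univ_sdiff]
    simp
  rw [hexpand, Finset.sum_powerset, Finset.card_univ, Fintype.card_fin]
  refine Finset.sum_congr rfl fun k _ => Finset.sum_congr rfl fun R hR => ?_
  have hRk : R.card = k := (Finset.mem_powersetCard.mp hR).2
  rw [← Finset.sum_fiberwise_of_maps_to (t := Finset.powersetCard k Finset.univ)
    (g := fun p : Equiv.Perm (Fin N) × Equiv.Perm (Fin N) => R.image p.1)]
  · refine Finset.sum_congr rfl fun R' hR' => ?_
    have hcard : R.card = R'.card := hRk.trans (Finset.mem_powersetCard.mp hR').2.symm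
    rw [Finset.filter_filter]
    convert sum_perm_pairs_agreeing hcard g using 2
    · congr
    · rw [hRk]
    · simp only [hg, Subtype.coe_inj]
  · intro p _
    simp [Finset.mem_powersetCard, Finset.card_image_of_injective _ p.1.injective, hRk]
end

section
/- Let Z be a random N×N complex matrix with i.i.d. standard complex Gaussian entries. For any 0 ≤ k₁, k₂ ≤ N with k₁ ≠ k₂, the expectation E_Z[ f^{=2(N−k₁)}(Z) · conj( f^{=2(N−k₂)}(Z) ) ] = 0. -/
open MeasureTheory ProbabilityTheory

/-- The standard complex Gaussian measure on `ℂ`: the distribution of `a + b i`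
where `a, b` are independent real Gaussians of mean `0` and variance `1/2`. -/
noncomputable def stdCGaussian : Measure ℂ :=
  ((gaussianReal 0 (1 / 2)).prod (gaussianReal 0 (1 / 2))).map
    (fun p => (p.1 : ℂ) + (p.2 : ℂ) * Complex.I)

/-- The distribution of an `N×N` random complex matrix with i.i.d. standard
complex Gaussian entries. -/
noncomputable def matrixGaussian (N : ℕ) : Measure (Fin N → Fin N → ℂ) :=
  Measure.pi fun _ : Fin N => Measure.pi fun _ : Fin N => stdCGaussian

instance : IsProbabilityMeasure stdCGaussian :=
  Measure.isProbabilityMeasure_map (by fun_prop)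

theorem memLp_ofReal_fst_gaussianReal_prod {p : ENNReal} (hp : p ≠ ⊤) (v w : NNReal) :
    MemLp (fun x : ℝ × ℝ => (x.1 : ℂ)) p ((gaussianReal 0 v).prod (gaussianReal 0 w)) :=
  MemLp.ofReal (K := ℂ) (f := Prod.fst)
    ((memLp_id_gaussianReal' (μ := 0) (v := v) p hp).comp_fst (gaussianReal 0 w))

theorem memLp_ofReal_snd_gaussianReal_prod {p : ENNReal} (hp : p ≠ ⊤) (v w : NNReal) :
    MemLp (fun x : ℝ × ℝ => (x.2 : ℂ)) p ((gaussianReal 0 v).prod (gaussianReal 0 w)) :=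
  MemLp.ofReal (K := ℂ) (f := Prod.snd)
    ((memLp_id_gaussianReal' (μ := 0) (v := w) p hp).comp_snd (gaussianReal 0 v))

theorem memLp_id_stdCGaussian {p : ENNReal} (hp : p ≠ ⊤) :
    MemLp (fun z : ℂ => z) p stdCGaussian := by
  rw [stdCGaussian, memLp_map_measure_iff (by fun_prop) (by fun_prop)]
  exact (memLp_ofReal_fst_gaussianReal_prod hp _ _).add
    ((memLp_ofReal_snd_gaussianReal_prod hp _ _).mul_const Complex.I)

theorem integral_id_stdCGaussian : ∫ z, z ∂stdCGaussian = 0 := by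
  rw [stdCGaussian, integral_map (by fun_prop) (by fun_prop),
    integral_add ((memLp_ofReal_fst_gaussianReal_prod ENNReal.one_ne_top _ _).integrable le_rfl)
      (((memLp_ofReal_snd_gaussianReal_prod ENNReal.one_ne_top _ _).integrable le_rfl).mul_const
        Complex.I),
    integral_mul_const,
    integral_fun_fst (fun x : ℝ => (x : ℂ)), integral_fun_snd (fun x : ℝ => (x : ℂ)),
    integral_complex_ofReal, integral_id_gaussianReal]
  simp

theorem integral_sq_gaussianReal_zero (v : NNReal) : ∫ x, x ^ 2 ∂gaussianReal 0 v = v := by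
  have h := variance_id_gaussianReal (μ := 0) (v := v)
  rw [variance_of_integral_eq_zero (by fun_prop) (by simp)] at h
  simpa using h

theorem h2_eq_ofReal (z : ℂ) : h2 z = ((z.re ^ 2 + z.im ^ 2 - 1 : ℝ) : ℂ) := by
  rw [h2, Complex.mul_conj, Complex.normSq_apply]
  push_cast
  ring

theorem integral_h2_stdCGaussian : ∫ z, h2 z ∂stdCGaussian = 0 := by
  have h := (memLp_id_gaussianReal' (μ := 0) (v := 1 / 2) 2 (by simp)).integrable_sq
  have h₁ : Integrable (fun p : ℝ × ℝ => p.1 ^ 2)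
      ((gaussianReal 0 (1 / 2)).prod (gaussianReal 0 (1 / 2))) := h.comp_fst _
  have h₂ : Integrable (fun p : ℝ × ℝ => p.2 ^ 2)
      ((gaussianReal 0 (1 / 2)).prod (gaussianReal 0 (1 / 2))) := h.comp_snd _
  simp_rw [h2_eq_ofReal]
  rw [integral_complex_ofReal, stdCGaussian, integral_map (by fun_prop) (by fun_prop)]
  simp only [Complex.add_re, Complex.ofReal_re, Complex.mul_re, Complex.I_re, mul_zero,
    Complex.ofReal_im, Complex.I_im, mul_one, sub_self, add_zero, Complex.add_im, Complex.mul_im,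
    zero_add]
  rw [integral_sub (h₁.fun_add h₂) (integrable_const _), integral_add h₁ h₂,
    integral_fun_fst (fun x : ℝ => x ^ 2), integral_fun_snd (fun x : ℝ => x ^ 2),
    integral_sq_gaussianReal_zero]
  norm_num

/-- The factor contributed by one matrix entry `z`: `a` and `b` say whether the entry is hit by
the first and by the second partial matching. -/
noncomputable def entryFactor (a b : Prop) [Decidable a] [Decidable b] (z : ℂ) : ℂ :=
  if a then if b then h2 z else z else if b then (starRingEnd ℂ) z else 1

theorem memLp_entryFactor (a b : Prop) [Decidable a] [Decidable b] :
    MemLp (entryFactor a b) 2 stdCGaussian := by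
  have h := memLp_id_stdCGaussian (p := 2) (by simp)
  have h4 := memLp_id_stdCGaussian (p := 4) (by simp)
  have : ENNReal.HolderTriple 4 4 2 := ⟨by
    rw [← ENNReal.toReal_eq_toReal_iff' (by simp) (by simp)]
    rw [ENNReal.toReal_add (by simp) (by simp)]
    norm_num⟩
  unfold entryFactor
  split_ifs
  · exact (h4.star.mul h4 (r := 2)).sub (memLp_const 1)
  · exact h
  · exact h.star
  · exact memLp_const 1

theorem integral_entryFactor_of_left (a b : Prop) [Decidable a] [Decidable b] (ha : a) :
    ∫ z, entryFactor a b z ∂stdCGaussian = 0 := by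
  by_cases hb : b
  · simpa [entryFactor, ha, hb] using integral_h2_stdCGaussian
  · simpa [entryFactor, ha, hb] using integral_id_stdCGaussian

theorem integrable_prod_prod_matrixGaussian {N : ℕ} {f : Fin N → Fin N → ℂ → ℂ}
    (hf : ∀ r c, Integrable (f r c) stdCGaussian) :
    Integrable (fun Z => ∏ r, ∏ c, f r c (Z r c)) (matrixGaussian N) :=
  Integrable.fintype_prod (f := fun r (x : Fin N → ℂ) => ∏ c, f r c (x c))
    fun r => Integrable.fintype_prod (hf r)

theorem integral_prod_prod_matrixGaussian {N : ℕ} (f : Fin N → Fin N → ℂ → ℂ) :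
    ∫ Z, ∏ r, ∏ c, f r c (Z r c) ∂matrixGaussian N =
      ∏ r, ∏ c, ∫ z, f r c z ∂stdCGaussian := by
  rw [matrixGaussian,
    integral_fintype_prod_eq_prod (fun r (x : Fin N → ℂ) => ∏ c, f r c (x c))]
  simp_rw [integral_fintype_prod_eq_prod]

/-- The Hermite-type monomial attached to two partial maps `s`, `t` from columns to rows. -/
noncomputable def matchingMonomial {N : ℕ} (s t : Fin N → Option (Fin N))
    (Z : Fin N → Fin N → ℂ) : ℂ :=
  ∏ r, ∏ c, entryFactor (s c = some r) (t c = some r) (Z r c)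

theorem matchingMonomial_mul_conj {N : ℕ} (s t s' t' : Fin N → Option (Fin N))
    (Z : Fin N → Fin N → ℂ) :
    matchingMonomial s t Z * (starRingEnd ℂ) (matchingMonomial s' t' Z) =
      ∏ r, ∏ c, (entryFactor (s c = some r) (t c = some r) (Z r c) *
        (starRingEnd ℂ) (entryFactor (s' c = some r) (t' c = some r) (Z r c))) := by
  simp only [matchingMonomial, map_prod, Finset.prod_mul_distrib]

theorem integrable_matchingMonomial_mul_conj {N : ℕ} (s t s' t' : Fin N → Option (Fin N)) :
    Integrable (fun Z => matchingMonomial s t Z * (starRingEnd ℂ) (matchingMonomial s' t' Z))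
      (matrixGaussian N) := by
  simp_rw [matchingMonomial_mul_conj]
  exact integrable_prod_prod_matrixGaussian
    (f := fun r c z => entryFactor (s c = some r) (t c = some r) z *
      (starRingEnd ℂ) (entryFactor (s' c = some r) (t' c = some r) z))
    fun r c => (memLp_entryFactor _ _).integrable_mul (memLp_entryFactor _ _).star

theorem integral_matchingMonomial_mul_conj_eq_zero {N : ℕ} {s t s' t' : Fin N → Option (Fin N)}
    {c r : Fin N} (hs : s c = some r) (hs' : s' c = none) (ht' : t' c = none) :
    ∫ Z, matchingMonomial s t Z * (starRingEnd ℂ) (matchingMonomial s' t' Z)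
      ∂matrixGaussian N = 0 := by
  simp_rw [matchingMonomial_mul_conj]
  rw [integral_prod_prod_matrixGaussian
    (fun r c z => entryFactor (s c = some r) (t c = some r) z *
      (starRingEnd ℂ) (entryFactor (s' c = some r) (t' c = some r) z))]
  refine Finset.prod_eq_zero (Finset.mem_univ r) (Finset.prod_eq_zero (Finset.mem_univ c) ?_)
  have h (z : ℂ) : entryFactor (s' c = some r) (t' c = some r) z = 1 := by
    simp [entryFactor, hs', ht']
  simp_rw [h, map_one, mul_one]
  exact integral_entryFactor_of_left _ _ hs

/-- The monomials attached to pairs of partial maps that are undefined exactly on a common set of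
`k` columns. -/
def matchingMonomials (N k : ℕ) : Set ((Fin N → Fin N → ℂ) → ℂ) :=
  {g | ∃ (R : Finset (Fin N)) (s t : Fin N → Option (Fin N)), R.card = k ∧
    (∀ c, s c = none ↔ c ∈ R) ∧ (∀ c, t c = none ↔ c ∈ R) ∧ g = matchingMonomial s t}

theorem integral_mul_conj_eq_zero_of_mem_matchingMonomials {N k₁ k₂ : ℕ} (hne : k₁ ≠ k₂)
    {f g : (Fin N → Fin N → ℂ) → ℂ} (hf : f ∈ matchingMonomials N k₁)
    (hg : g ∈ matchingMonomials N k₂) :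
    ∫ Z, f Z * (starRingEnd ℂ) (g Z) ∂matrixGaussian N = 0 := by
  obtain ⟨R₁, s₁, t₁, hR₁, hs₁, ht₁, rfl⟩ := hf
  obtain ⟨R₂, s₂, t₂, hR₂, hs₂, ht₂, rfl⟩ := hg
  have hR : R₁ ≠ R₂ := fun h => hne (by rw [← hR₁, ← hR₂, h])
  obtain ⟨c, hc⟩ : ∃ c, ¬(c ∈ R₁ ↔ c ∈ R₂) := by
    by_contra! h
    exact hR (Finset.ext h)
  by_cases hc₁ : c ∈ R₁
  · have hc₂ : c ∉ R₂ := by tauto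
    obtain ⟨r, hr⟩ := Option.ne_none_iff_exists'.mp (mt (hs₂ c).mp hc₂)
    have h := congrArg (starRingEnd ℂ) (integral_matchingMonomial_mul_conj_eq_zero (t := t₂) hr
      ((hs₁ c).mpr hc₁) ((ht₁ c).mpr hc₁))
    rw [← integral_conj, map_zero] at h
    simpa [mul_comm] using h
  · have hc₂ : c ∈ R₂ := by tauto
    obtain ⟨r, hr⟩ := Option.ne_none_iff_exists'.mp (mt (hs₁ c).mp hc₁)
    exact integral_matchingMonomial_mul_conj_eq_zero hr ((hs₂ c).mpr hc₂) ((ht₂ c).mpr hc₂)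

/-- The partial map on `Fin N` given by a bijection between complements. -/
def partialMap {N : ℕ} {R R' : Finset (Fin N)}
    (σ : {i : Fin N // i ∈ Rᶜ} ≃ {i : Fin N // i ∈ R'ᶜ}) (c : Fin N) : Option (Fin N) :=
  if h : c ∈ Rᶜ then some (σ ⟨c, h⟩) else none

theorem partialMap_eq_none_iff {N : ℕ} {R R' : Finset (Fin N)}
    (σ : {i : Fin N // i ∈ Rᶜ} ≃ {i : Fin N // i ∈ R'ᶜ}) (c : Fin N) :
    partialMap σ c = none ↔ c ∈ R := by
  simp [partialMap]

theorem prod_entryFactor_some (n : ℕ) (x y : Fin n) (w : Fin n → ℂ) :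
    ∏ r, entryFactor (some x = some r) (some y = some r) (w r) =
      if x = y then h2 (w x) else w x * (starRingEnd ℂ) (w y) := by
  split_ifs with h
  · subst h
    rw [Fintype.prod_eq_single x fun r hr => by simp [entryFactor, hr.symm]]
    simp [entryFactor]
  · rw [Fintype.prod_eq_mul x y h fun r hr => by simp [entryFactor, hr.1.symm, hr.2.symm]]
    simp [entryFactor, h, Ne.symm h]

theorem prod_eq_matchingMonomial {N : ℕ} {R R' : Finset (Fin N)}
    (σ ρ : {i : Fin N // i ∈ Rᶜ} ≃ {i : Fin N // i ∈ R'ᶜ}) (Z : Fin N → Fin N → ℂ) :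
    (∏ i : {i : Fin N // i ∈ Rᶜ},
      if σ i = ρ i then h2 (Z (σ i) i) else Z (σ i) i * (starRingEnd ℂ) (Z (ρ i) i)) =
      matchingMonomial (partialMap σ) (partialMap ρ) Z := by
  rw [matchingMonomial, Finset.prod_comm,
    ← Finset.prod_subset (Finset.subset_univ Rᶜ) fun c _ hc =>
      Finset.prod_eq_one fun r _ => by simp [entryFactor, partialMap, hc],
    ← Finset.prod_coe_sort Rᶜ]
  refine Finset.prod_congr rfl fun i _ => ?_
  have h (τ : {i : Fin N // i ∈ Rᶜ} ≃ {i : Fin N // i ∈ R'ᶜ}) :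
      partialMap τ i = some (τ i : Fin N) := dif_pos i.2
  simp only [h, prod_entryFactor_some N _ _ fun r => Z r i, Subtype.ext_iff]

theorem fdeg_mem_span_matchingMonomials (N k : ℕ) :
    fdeg N k ∈ Submodule.span ℂ (matchingMonomials N k) := by
  have h : fdeg N k =
      ∑ R ∈ Finset.powersetCard k (Finset.univ : Finset (Fin N)),
      ∑ R' ∈ Finset.powersetCard k (Finset.univ : Finset (Fin N)),
        (Nat.factorial k : ℂ) •
          ∑ σ : {i : Fin N // i ∈ Rᶜ} ≃ {i : Fin N // i ∈ R'ᶜ},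
          ∑ ρ : {i : Fin N // i ∈ Rᶜ} ≃ {i : Fin N // i ∈ R'ᶜ},
            matchingMonomial (partialMap σ) (partialMap ρ) := by
    funext Z
    simp only [fdeg, prod_eq_matchingMonomial, Finset.sum_apply, Pi.smul_apply, smul_eq_mul]
  rw [h]
  refine Submodule.sum_mem _ fun R hR => Submodule.sum_mem _ fun R' _ =>
    Submodule.smul_mem _ _ <| Submodule.sum_mem _ fun σ _ => Submodule.sum_mem _ fun ρ _ =>
      Submodule.subset_span ⟨R, partialMap σ, partialMap ρ, (Finset.mem_powersetCard.mp hR).2,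
        partialMap_eq_none_iff σ, partialMap_eq_none_iff ρ, rfl⟩

/-- For a random `N×N` matrix `Z` with i.i.d. standard complex Gaussian
entries and `k₁ ≠ k₂` with `k₁, k₂ ≤ N`,
`E_Z[ f^{=2(N−k₁)}(Z) · conj(f^{=2(N−k₂)}(Z)) ] = 0`. -/
theorem fdeg_orthogonal (N k₁ k₂ : ℕ) (hk₁ : k₁ ≤ N) (hk₂ : k₂ ≤ N) (hne : k₁ ≠ k₂) :
    ∫ Z, fdeg N k₁ Z * (starRingEnd ℂ) (fdeg N k₂ Z) ∂(matrixGaussian N) = 0 := by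
  refine (Submodule.span_induction₂
    (p := fun f g _ _ => Integrable (fun Z => f Z * (starRingEnd ℂ) (g Z)) (matrixGaussian N) ∧
      ∫ Z, f Z * (starRingEnd ℂ) (g Z) ∂(matrixGaussian N) = 0)
    ?_ ?_ ?_ ?_ ?_ ?_ ?_ (fdeg_mem_span_matchingMonomials N k₁)
    (fdeg_mem_span_matchingMonomials N k₂)).2
  · intro f g hf hg
    refine ⟨?_, integral_mul_conj_eq_zero_of_mem_matchingMonomials hne hf hg⟩
    obtain ⟨_, s₁, t₁, _, _, _, rfl⟩ := hf
    obtain ⟨_, s₂, t₂, _, _, _, rfl⟩ := hg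
    exact integrable_matchingMonomial_mul_conj s₁ t₁ s₂ t₂
  · simp
  · simp
  · rintro f g h _ _ _ ⟨hf, hf0⟩ ⟨hg, hg0⟩
    simp only [Pi.add_apply, add_mul]
    exact ⟨hf.add hg, by rw [integral_add hf hg, hf0, hg0, add_zero]⟩
  · rintro f g h _ _ _ ⟨hg, hg0⟩ ⟨hh, hh0⟩
    simp only [Pi.add_apply, map_add, mul_add]
    exact ⟨hg.add hh, by rw [integral_add hg hh, hg0, hh0, add_zero]⟩
  · rintro a f g _ _ ⟨h, h0⟩
    simp only [Pi.smul_apply, smul_eq_mul, mul_assoc]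
    exact ⟨h.const_mul a, by rw [integral_const_mul, h0, mul_zero]⟩
  · rintro a f g _ _ ⟨h, h0⟩
    simp only [Pi.smul_apply, smul_eq_mul, map_mul, mul_left_comm _ ((starRingEnd ℂ) a)]
    exact ⟨h.const_mul _, by rw [integral_const_mul, h0, mul_zero]⟩
end

section
/- Let Ω be a finite nonempty type, let p : Ω → ℝ be a probability distribution (p ≥ 0 pointwise, ∑_{x ∈ Ω} p(x) = 1), and let q : Ω → ℝ satisfy ∑_{x ∈ Ω} q(x) = 1 and ∑_{x ∈ Ω} |p(x) − q(x)| ≤ ε. Set S = ∑_{x ∈ Ω} max(q(x), 0) and define q'(x) = max(q(x), 0) / S. Then S ≥ 1, q' is a probability distribution on Ω, and ∑_{x ∈ Ω} |p(x) − q'(x)| ≤ 2ε. -/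
/-- Replacing `b` by a point `c` of the interval `[0, max b 0]` increases the distance to a
nonnegative `a` by at most `b - c`. -/
theorem abs_sub_le_abs_sub_add_sub {a b c : ℝ} (ha : 0 ≤ a) (hc : 0 ≤ c) (hcb : c ≤ max b 0) :
    |a - c| ≤ |a - b| + (b - c) := by
  rcases le_total b 0 with hb | hb
  · rw [max_eq_right hb] at hcb
    rw [le_antisymm hcb hc, sub_zero, sub_zero, abs_of_nonneg ha]
    linarith [le_abs_self (a - b)]
  · rw [max_eq_left hb] at hcb
    simpa only [abs_of_nonneg (sub_nonneg.mpr hcb)] using abs_sub_le a b c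

/-- Let `Ω` be a finite nonempty type, `p` a probability distribution on
`Ω`, and `q : Ω → ℝ` a quasi-probability (`∑ q = 1`) with `∑ |p − q| ≤ ε`.  With
`S = ∑ max(q x) 0` and `q' x = max (q x) 0 / S`, we have `S ≥ 1`, `q'` is a probability
distribution, and `∑ |p − q'| ≤ 2ε`. -/
theorem renormalized_positive_part {Ω : Type*} [Fintype Ω] [Nonempty Ω] (ε : ℝ)
    (p q : Ω → ℝ) (hp0 : ∀ x, 0 ≤ p x) (hp1 : ∑ x, p x = 1)
    (hq1 : ∑ x, q x = 1) (hpq : ∑ x, |p x - q x| ≤ ε) :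
    1 ≤ ∑ x, max (q x) 0 ∧
    (∀ x, 0 ≤ max (q x) 0 / (∑ y, max (q y) 0)) ∧
    (∑ x, max (q x) 0 / (∑ y, max (q y) 0)) = 1 ∧
    ∑ x, |p x - max (q x) 0 / (∑ y, max (q y) 0)| ≤ 2 * ε := by
  set S := ∑ x, max (q x) 0 with hS
  have hS1 : 1 ≤ S := hq1 ▸ Finset.sum_le_sum fun x _ => le_max_left (q x) 0
  have hS0 : 0 < S := one_pos.trans_le hS1
  have hnonneg : ∀ x, 0 ≤ max (q x) 0 / S := fun x => div_nonneg (le_max_right _ _) hS0.le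
  have hsum : ∑ x, max (q x) 0 / S = 1 := by
    rw [← Finset.sum_div, ← hS, div_self hS0.ne']
  refine ⟨hS1, hnonneg, hsum, ?_⟩
  have hε : 0 ≤ ε := (Finset.sum_nonneg fun x _ => abs_nonneg (p x - q x)).trans hpq
  calc ∑ x, |p x - max (q x) 0 / S|
      ≤ ∑ x, (|p x - q x| + (q x - max (q x) 0 / S)) := Finset.sum_le_sum fun x _ =>
        abs_sub_le_abs_sub_add_sub (hp0 x) (hnonneg x) (div_le_self (le_max_right _ _) hS1)
    _ = ∑ x, |p x - q x| := by
        rw [Finset.sum_add_distrib, Finset.sum_sub_distrib, hq1, hsum, sub_self, add_zero]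
    _ ≤ 2 * ε := by linarith
end

section
/- Let N be a positive integer, 0 ≤ j ≤ N, and let a, b : [N] × [j] → ℂ be arbitrary complex numbers. Then ∑_{(σ,ρ) ∈ S_N × S_N, σ(i)=ρ(i) for all i with j < i ≤ N} ∏_{i=1}^{j} a(σ(i), i) · b(ρ(i), i) = (N−j)! · ∑_{J ⊆ [N], |J| = j} ∑_{σ₀, ρ₀} ∏_{i=1}^{j} a(σ₀(i), i) · b(ρ₀(i), i), where the inner sum on the right ranges over all pairs of bijections σ₀, ρ₀ : [j] → J. -/
open Finset in
/-- Pairs of permutations that agree off `p` and whose first component carries `p` onto `q`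
restrict to pairs of bijections from `p` onto `q`, each arising once for every bijection between
the complements. -/
theorem sum_perm_pairs_eqOn_compl {α M : Type*} [Fintype α] [DecidableEq α] [AddCommMonoid M]
    (p q : α → Prop) [DecidablePred p] [DecidablePred q]
    (F : (Subtype p → α) → (Subtype p → α) → M) :
    ∑ σρ : Equiv.Perm α × Equiv.Perm α with
        (∀ i, ¬ p i → σρ.1 i = σρ.2 i) ∧ ∀ i, p i ↔ q (σρ.1 i),
      F (fun i => σρ.1 i) (fun i => σρ.2 i)
    = Fintype.card ({i // ¬ p i} ≃ {i // ¬ q i}) •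
      ∑ s : Subtype p ≃ Subtype q, ∑ r : Subtype p ≃ Subtype q,
        F (fun i => s i) (fun i => r i) := by
  have glue_pos (s : Subtype p ≃ Subtype q) (t : {i // ¬ p i} ≃ {i // ¬ q i}) (i : Subtype p) :
      Equiv.subtypeCongr s t i = s i := by
    simp [Equiv.subtypeCongr, Equiv.sumCompl_symm_apply_of_pos i.2]
  have glue_neg (s : Subtype p ≃ Subtype q) (t : {i // ¬ p i} ≃ {i // ¬ q i})
      (i : {i // ¬ p i}) : Equiv.subtypeCongr s t i = t i := by
    simp [Equiv.subtypeCongr, Equiv.sumCompl_symm_apply_of_neg i.2]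
  rw [← card_univ, ← sum_const, ← Fintype.sum_prod_type', ← Fintype.sum_prod_type']
  symm
  refine sum_bij (fun x _ => (Equiv.subtypeCongr x.1.2 x.1.1, Equiv.subtypeCongr x.2 x.1.1))
    ?_ ?_ ?_ ?_
  · rintro ⟨⟨t, s⟩, r⟩ -
    simp only [mem_filter, mem_univ, true_and]
    refine ⟨fun i hi => ?_, fun i => ?_⟩
    · rw [glue_neg s t ⟨i, hi⟩, glue_neg r t ⟨i, hi⟩]
    · by_cases hi : p i
      · rw [glue_pos s t ⟨i, hi⟩]
        exact iff_of_true hi (s _).2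
      · rw [glue_neg s t ⟨i, hi⟩]
        exact iff_of_false hi (t _).2
  · rintro ⟨⟨t, s⟩, r⟩ - ⟨⟨t₂, s₂⟩, r₂⟩ - h
    simp only [Prod.mk.injEq] at h ⊢
    refine ⟨⟨?_, ?_⟩, ?_⟩ <;> ext i
    · rw [← glue_neg s, ← glue_neg s₂, h.1]
    · rw [← glue_pos s t, ← glue_pos s₂ t₂, h.1]
    · rw [← glue_pos r t, ← glue_pos r₂ t₂, h.2]
  · rintro ⟨σ, ρ⟩ h
    simp only [mem_filter, mem_univ, true_and] at h
    obtain ⟨hag, hσ⟩ := h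
    have hρ_neg (i : α) (hi : ¬ p i) : ¬ q (ρ i) := by
      rw [← hag i hi, ← hσ]
      exact hi
    have hρ (i : α) : p i ↔ q (ρ i) := by
      refine ⟨fun hi => ?_, fun h => by_contra fun hi => hρ_neg i hi h⟩
      by_contra hq
      have hk : ¬ p (σ.symm (ρ i)) := by rwa [hσ, σ.apply_symm_apply]
      have := hag _ hk
      rw [σ.apply_symm_apply] at this
      exact hk (ρ.injective this ▸ hi)
    refine ⟨((σ.subtypeEquiv fun i => not_congr (hσ i), σ.subtypeEquiv hσ), ρ.subtypeEquiv hρ),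
      mem_univ _, ?_⟩
    refine Prod.ext (Equiv.ext fun i => ?_) (Equiv.ext fun i => ?_)
    · by_cases hi : p i
      · exact glue_pos _ _ ⟨i, hi⟩
      · exact glue_neg _ _ ⟨i, hi⟩
    · by_cases hi : p i
      · exact glue_pos _ _ ⟨i, hi⟩
      · exact (glue_neg _ _ ⟨i, hi⟩).trans (hag i hi)
  · rintro ⟨⟨t, s⟩, r⟩ -
    simp only [glue_pos]

/-- For `j ≤ N` and arbitrary `a, b : [N] × [j] → ℂ`:
`∑_{(σ,ρ) ∈ S_N×S_N, σ(i)=ρ(i) ∀ i > j} ∏_{i=1}^j a(σ(i),i)·b(ρ(i),i)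
 = (N−j)! · ∑_{J ⊆ [N], |J|=j} ∑_{σ₀,ρ₀ : [j] ≃ J} ∏_{i=1}^j a(σ₀(i),i)·b(ρ₀(i),i)`. -/
theorem restricted_permutation_pair_identity (N j : ℕ) (hj : j ≤ N)
    (a b : Fin N → Fin j → ℂ) :
    ∑ σρ ∈ Finset.univ.filter
        (fun σρ : Equiv.Perm (Fin N) × Equiv.Perm (Fin N) =>
          ∀ i : Fin N, j ≤ (i : ℕ) → σρ.1 i = σρ.2 i),
      ∏ i : Fin j, a (σρ.1 (Fin.castLE hj i)) i * b (σρ.2 (Fin.castLE hj i)) i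
    = (Nat.factorial (N - j) : ℂ) *
      ∑ J ∈ Finset.powersetCard j (Finset.univ : Finset (Fin N)),
        ∑ σ₀ : Fin j ≃ {x : Fin N // x ∈ J},
        ∑ ρ₀ : Fin j ≃ {x : Fin N // x ∈ J},
          ∏ i : Fin j, a (σ₀ i) i * b (ρ₀ i) i := by
  let e : Fin j ≃ {i : Fin N // (i : ℕ) < j} :=
    { toFun := fun i => ⟨Fin.castLE hj i, i.2⟩
      invFun := fun i => ⟨i.1, i.2⟩
      left_inv := fun _ => rfl
      right_inv := fun _ => rfl }
  have card_initial : Fintype.card {i : Fin N // (i : ℕ) < j} = j := by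
    rw [← Fintype.card_congr e, Fintype.card_fin]
  let image (σρ : Equiv.Perm (Fin N) × Equiv.Perm (Fin N)) : Finset (Fin N) :=
    (Finset.univ.filter fun i : Fin N => (i : ℕ) < j).map σρ.1.toEmbedding
  have image_eq_iff (σρ : Equiv.Perm (Fin N) × Equiv.Perm (Fin N)) (J : Finset (Fin N)) :
      image σρ = J ↔ ∀ i : Fin N, (i : ℕ) < j ↔ σρ.1 i ∈ J := by
    rw [Finset.ext_iff, ← σρ.1.forall_congr_right]
    simp [image]
  rw [← Finset.sum_fiberwise_of_maps_to (g := image)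
    (t := Finset.powersetCard j (Finset.univ : Finset (Fin N))), Finset.mul_sum]
  · refine Finset.sum_congr rfl fun J hJ => ?_
    have hJ : J.card = j := (Finset.mem_powersetCard.mp hJ).2
    have card_compl : Fintype.card ({i : Fin N // ¬ (i : ℕ) < j} ≃ {i // ¬ i ∈ J})
        = (N - j).factorial := by
      have h_dom : Fintype.card {i : Fin N // ¬ (i : ℕ) < j} = N - j := by
        rw [Fintype.card_subtype_compl, card_initial, Fintype.card_fin]
      have h_cod : Fintype.card {i // ¬ i ∈ J} = N - j := by
        rw [Fintype.card_subtype_compl, Fintype.card_coe, hJ, Fintype.card_fin]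
      rw [Fintype.card_equiv (Fintype.equivOfCardEq (h_dom.trans h_cod.symm)), h_dom]
    have key := sum_perm_pairs_eqOn_compl (fun i : Fin N => (i : ℕ) < j) (· ∈ J)
      fun s r => ∏ i : Fin j, a (s (e i)) i * b (r (e i)) i
    rw [card_compl, nsmul_eq_mul] at key
    rw [Finset.filter_filter]
    simp only [image_eq_iff]
    simp only [not_lt] at key
    refine key.trans (congrArg _ ?_)
    refine Finset.sum_equiv (e.symm.equivCongr (Equiv.refl _)) (by simp) fun s _ => ?_
    exact Finset.sum_equiv (e.symm.equivCongr (Equiv.refl _)) (by simp) fun r _ => rfl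
  · intro σρ _
    rw [Finset.mem_powersetCard]
    refine ⟨Finset.subset_univ _, ?_⟩
    rw [Finset.card_map, ← Fintype.card_subtype, card_initial]
end

section
/- Let U be an N×M complex matrix whose rows are orthonormal, i.e., ∑_{r=1}^{M} U(a,r) · conj(U(b,r)) = δ_{ab} for all a, b ∈ [N]. Then for every 0 ≤ j ≤ N and every choice of r₁, …, r_j ∈ [M]: ∑_{r_{j+1}, …, r_N ∈ [M]} ∑_{(σ,ρ) ∈ S_N × S_N} ∏_{i=1}^{N} U(σ(i), r_i) · conj(U(ρ(i), r_i)) = ∑_{(σ,ρ) ∈ S_N × S_N, σ(i)=ρ(i) for all i with j < i ≤ N} ∏_{i=1}^{j} U(σ(i), r_i) · conj(U(ρ(i), r_i)). -/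
/-- Summing a product `∏ i, f i (t i)` over the tuples `t` with prescribed first `j` entries
factors into the prescribed terms times the full sums over the remaining coordinates. -/
theorem sum_prod_filter_castAdd_eq {R α : Type*} [CommSemiring R] [Fintype α] [DecidableEq α]
    {j k : ℕ} (f : Fin (j + k) → α → R) (r : Fin j → α) :
    ∑ t ∈ Finset.univ.filter
        (fun t : Fin (j + k) → α => ∀ i : Fin j, t (Fin.castAdd k i) = r i),
      ∏ i, f i (t i)
    = (∏ i : Fin j, f (Fin.castAdd k i) (r i)) * ∏ i : Fin k, ∑ x, f (Fin.natAdd j i) x := by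
  have hfilter : Finset.univ.filter
      (fun t : Fin (j + k) → α => ∀ i : Fin j, t (Fin.castAdd k i) = r i)
      = Fintype.piFinset
        (Fin.addCases (motive := fun _ => Finset α) (fun i => {r i}) (fun _ => Finset.univ)) := by
    ext t
    simp [Fintype.mem_piFinset, Fin.forall_fin_add]
  rw [hfilter, ← Finset.prod_univ_sum, Fin.prod_univ_add]
  simp

/-- For an `N×M` complex matrix `U` with orthonormal rows, `j ≤ N`, and
fixed `r₁,…,r_j ∈ [M]`, summing the first-quantized Boson Sampling weight over the last
`N−j` coordinates yields the restricted-permutation-pair marginal expression. -/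
theorem first_quantized_marginal (N M j : ℕ) (hj : j ≤ N)
    (U : Fin N → Fin M → ℂ)
    (hU : ∀ a b : Fin N,
      (∑ r : Fin M, U a r * (starRingEnd ℂ) (U b r)) = if a = b then 1 else 0)
    (r : Fin j → Fin M) :
    ∑ t ∈ Finset.univ.filter
        (fun t : Fin N → Fin M => ∀ i : Fin j, t (Fin.castLE hj i) = r i),
      ∑ σ : Equiv.Perm (Fin N), ∑ ρ : Equiv.Perm (Fin N),
        ∏ i : Fin N, U (σ i) (t i) * (starRingEnd ℂ) (U (ρ i) (t i))
    = ∑ σρ ∈ Finset.univ.filter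
        (fun σρ : Equiv.Perm (Fin N) × Equiv.Perm (Fin N) =>
          ∀ i : Fin N, j ≤ (i : ℕ) → σρ.1 i = σρ.2 i),
      ∏ i : Fin j,
        U (σρ.1 (Fin.castLE hj i)) (r i) * (starRingEnd ℂ) (U (σρ.2 (Fin.castLE hj i)) (r i)) := by
  obtain ⟨k, rfl⟩ := Nat.exists_eq_add_of_le hj
  have hcast (i : Fin j) : Fin.castLE hj i = Fin.castAdd k i := rfl
  have htail (σ ρ : Equiv.Perm (Fin (j + k))) :
      (∀ i : Fin (j + k), j ≤ (i : ℕ) → σ i = ρ i) ↔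
        ∀ i : Fin k, σ (Fin.natAdd j i) = ρ (Fin.natAdd j i) := by
    simp [Fin.forall_fin_add]
  simp only [hcast]
  rw [Finset.sum_filter (s := Finset.univ (α := Equiv.Perm _ × Equiv.Perm _)),
    Fintype.sum_prod_type, Finset.sum_comm]
  refine Finset.sum_congr rfl fun σ _ => ?_
  rw [Finset.sum_comm]
  refine Finset.sum_congr rfl fun ρ _ => ?_
  rw [sum_prod_filter_castAdd_eq
    (fun i x => U (σ i) x * (starRingEnd ℂ) (U (ρ i) x)) r]
  simp only [hU, htail, Finset.prod_ite_zero, Finset.prod_const_one, Finset.mem_univ,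
    forall_const, mul_ite, mul_one, mul_zero]
end

section
/- Let Z be a random N×N complex matrix with i.i.d. standard complex Gaussian entries. For any 0 ≤ k₁, k₂ ≤ N with k₁ ≠ k₂, the expectation E_Z[ f^{=(N−k₁)}(Z) · conj( f^{=(N−k₂)}(Z) ) ] = 0. -/
open MeasureTheory ProbabilityTheory

/-- The degree-`(N−k)` part of `|Per(Z)|²` under partial distinguishability:
`f^{=(N−k)}(Z) = ∑_{(σ,ρ) : |{i : σ(i)=ρ(i)}| = k} ∏_i Z(σ(i),i) · conj(Z(ρ(i),i))`. -/
noncomputable def fdist (N k : ℕ) (Z : Fin N → Fin N → ℂ) : ℂ :=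
  ∑ σρ ∈ Finset.univ.filter
      (fun σρ : Equiv.Perm (Fin N) × Equiv.Perm (Fin N) =>
        (Finset.univ.filter fun i : Fin N => σρ.1 i = σρ.2 i).card = k),
    ∏ i : Fin N, Z (σρ.1 i) i * (starRingEnd ℂ) (Z (σρ.2 i) i)

/-- Entrywise multiplication of a complex matrix by a matrix of signs. -/
def signFlip {N : ℕ} (g : Fin N → Fin N → ℤˣ) (Z : Fin N → Fin N → ℂ) : Fin N → Fin N → ℂ :=
  fun r c => ((g r c : ℤ) : ℂ) * Z r c

/-- The monomial `∏ i, Z (σ i) i * conj (Z (ρ i) i)` attached to a pair of permutations. -/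
noncomputable def permMonomial {N : ℕ} (p : Equiv.Perm (Fin N) × Equiv.Perm (Fin N))
    (Z : Fin N → Fin N → ℂ) : ℂ :=
  ∏ i : Fin N, Z (p.1 i) i * (starRingEnd ℂ) (Z (p.2 i) i)

theorem signFlip_mul {N : ℕ} (g h : Fin N → Fin N → ℤˣ) (Z : Fin N → Fin N → ℂ) :
    signFlip (g * h) Z = signFlip g (signFlip h Z) := by
  funext r c
  simp [signFlip, mul_assoc]

instance isProbabilityMeasure_stdCGaussian : IsProbabilityMeasure stdCGaussian :=
  Measure.isProbabilityMeasure_map (by fun_prop)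

theorem measurePreserving_neg_stdCGaussian :
    MeasurePreserving (fun z : ℂ => -z) stdCGaussian stdCGaussian := by
  refine ⟨measurable_neg, ?_⟩
  have hneg : MeasurePreserving (fun x : ℝ => -x) (gaussianReal 0 (1 / 2))
      (gaussianReal 0 (1 / 2)) := ⟨measurable_neg, by simp [gaussianReal_map_neg]⟩
  have hprod := (hneg.prod hneg).map_eq
  unfold stdCGaussian
  rw [Measure.map_map (by fun_prop) (by fun_prop)]
  conv_rhs => rw [← hprod]
  rw [Measure.map_map (by fun_prop) (by fun_prop)]
  congr 1
  funext p
  simp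
  ring

theorem measurePreserving_sign_mul_stdCGaussian (s : ℤˣ) :
    MeasurePreserving (fun z : ℂ => ((s : ℤ) : ℂ) * z) stdCGaussian stdCGaussian := by
  rcases Int.units_eq_one_or s with rfl | rfl
  · simpa [Function.id_def] using MeasurePreserving.id stdCGaussian
  · simpa using measurePreserving_neg_stdCGaussian

theorem measurePreserving_signFlip {N : ℕ} (g : Fin N → Fin N → ℤˣ) :
    MeasurePreserving (signFlip g) (matrixGaussian N) (matrixGaussian N) :=
  measurePreserving_pi _ _ fun r =>
    measurePreserving_pi _ _ fun c => measurePreserving_sign_mul_stdCGaussian (g r c)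

/-- A function whose sum over all sign flips vanishes has zero Gaussian integral; no integrability
is needed, since the integral of a non-integrable function is zero by convention. -/
theorem integral_matrixGaussian_eq_zero {N : ℕ} {F : (Fin N → Fin N → ℂ) → ℂ}
    (hF : ∀ Z, ∑ g : Fin N → Fin N → ℤˣ, F (signFlip g Z) = 0) :
    ∫ Z, F Z ∂(matrixGaussian N) = 0 := by
  by_cases hint : Integrable F (matrixGaussian N)
  · have hflip (g : Fin N → Fin N → ℤˣ) :
        ∫ Z, F (signFlip g Z) ∂(matrixGaussian N) = ∫ Z, F Z ∂(matrixGaussian N) := by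
      have hg := measurePreserving_signFlip g
      have hm : AEStronglyMeasurable F ((matrixGaussian N).map (signFlip g)) := by
        rw [hg.map_eq]
        exact hint.aestronglyMeasurable
      rw [← integral_map hg.aemeasurable hm, hg.map_eq]
    have hsum := integral_finsetSum (μ := matrixGaussian N) Finset.univ
      (f := fun (g : Fin N → Fin N → ℤˣ) Z => F (signFlip g Z))
      fun g _ => (measurePreserving_signFlip g).integrable_comp_of_integrable hint
    simpa [hF, hflip] using hsum
  · exact integral_undef hint

/-- If exactly one of the two pairs of permutations agrees at some index, then flipping the sign of
a suitable entry in that column negates the product of the monomials. -/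
theorem exists_signFlip_eq_neg {N : ℕ} {p q : Equiv.Perm (Fin N) × Equiv.Perm (Fin N)} {i : Fin N}
    (h : ¬(p.1 i = p.2 i ↔ q.1 i = q.2 i)) :
    ∃ e : Fin N → Fin N → ℤˣ, ∀ Z,
      permMonomial p (signFlip e Z) * (starRingEnd ℂ) (permMonomial q (signFlip e Z)) =
        -(permMonomial p Z * (starRingEnd ℂ) (permMonomial q Z)) := by
  obtain ⟨b, hb⟩ : ∃ b : Fin N, b = if p.1 i = p.2 i then q.1 i else p.1 i := ⟨_, rfl⟩
  refine ⟨fun r c => if c = i ∧ r = b then -1 else 1, fun Z => ?_⟩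
  have hneg : (-1 : ℂ) = ∏ j : Fin N, if j = i then (-1 : ℂ) else 1 := by simp
  rw [← neg_one_mul (permMonomial p Z * _), hneg]
  simp only [permMonomial, map_prod, ← Finset.prod_mul_distrib]
  refine Finset.prod_congr rfl fun j _ => ?_
  by_cases hj : j = i
  · subst hj
    by_cases hp : p.1 j = p.2 j
    · have hq : q.2 j ≠ q.1 j := fun hq => h (by simp [hp, hq])
      by_cases hpq : p.2 j = q.1 j <;> simp [signFlip, hb, hp, hq, hpq]
    · have hq : q.1 j = q.2 j := by tauto
      by_cases hpq : q.2 j = p.1 j <;> simp [signFlip, hb, hp, hq, hpq, Ne.symm hp]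
  · simp [signFlip, hj]

theorem sum_signFlip_permMonomial_eq_zero {N : ℕ} {p q : Equiv.Perm (Fin N) × Equiv.Perm (Fin N)}
    {i : Fin N} (h : ¬(p.1 i = p.2 i ↔ q.1 i = q.2 i)) (Z : Fin N → Fin N → ℂ) :
    ∑ g : Fin N → Fin N → ℤˣ,
      permMonomial p (signFlip g Z) * (starRingEnd ℂ) (permMonomial q (signFlip g Z)) = 0 := by
  obtain ⟨e, he⟩ := exists_signFlip_eq_neg h
  rw [← self_eq_neg, ← Finset.sum_neg_distrib]
  refine (Fintype.sum_equiv (Equiv.mulLeft e) _ _ fun g => ?_).symm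
  rw [Equiv.coe_mulLeft, signFlip_mul, he]

/-- For a random `N×N` matrix `Z` with i.i.d. standard complex Gaussian
entries and `k₁ ≠ k₂` with `k₁, k₂ ≤ N`,
`E_Z[ f^{=(N−k₁)}(Z) · conj(f^{=(N−k₂)}(Z)) ] = 0`. -/
theorem fdist_orthogonal (N k₁ k₂ : ℕ) (hk₁ : k₁ ≤ N) (hk₂ : k₂ ≤ N) (hne : k₁ ≠ k₂) :
    ∫ Z, fdist N k₁ Z * (starRingEnd ℂ) (fdist N k₂ Z) ∂(matrixGaussian N) = 0 := by
  refine integral_matrixGaussian_eq_zero fun Z => ?_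
  simp only [fdist, map_sum, Finset.sum_mul_sum]
  rw [Finset.sum_comm]
  refine Finset.sum_eq_zero fun p hp => ?_
  rw [Finset.sum_comm]
  refine Finset.sum_eq_zero fun q hq => ?_
  obtain ⟨i, hi⟩ : ∃ i, ¬(p.1 i = p.2 i ↔ q.1 i = q.2 i) := by
    by_contra! hall
    refine hne ?_
    rw [← (Finset.mem_filter.mp hp).2, ← (Finset.mem_filter.mp hq).2]
    simp only [hall]
  exact sum_signFlip_permMonomial_eq_zero hi Z
end
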